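/- arXiv:2401.01047 — 2 statements merged into one kernel-verified Lean document; each statement's English description precedes it below -/
import Mathlib

section
/- Let k ≥ 3 be an integer, γ > 0, and 0 < δ ≤ Δ ≤ 1. Let (ζ_s), (b_s), (c_s), (z_s) be real sequences satisfying |ζ_s − 1| ≤ δ, |b_s| ≤ δ, |c_s − 1| ≤ δ for all s, and let (x_s) satisfy x_{s+1} = γ ζ_s (x_s + b_s + c_s z_s)^{k−1}. Let b̲_0 ≥ 0 and b̲_{s+1} = γ (1−Δ)^k · b̲_s^{k−1}. If |x_0| ≥ b̲_0 and |z_s| ≤ (Δ b̲_s − δ)/(1+δ) for all s ∈ ℕ, then |x_s| ≥ b̲_s for all s ∈ ℕ. -/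
/-!
Once `β ≤ ‖x‖`, the bound on `z` is exactly what makes the additive perturbation `b + c * z` have
norm at most `Δ * β`, so `‖x + b + c * z‖ ≥ (1 - Δ) * β`. In one step of the recursion the `n`-th
power costs `n` factors `1 - Δ` and the coefficient `ζ` costs one more; these are the `n + 1`
factors built into the comparison sequence.
-/

section SeminormedRing

variable {R : Type*} [SeminormedRing R] [NormOneClass R] {δ : ℝ}

lemma norm_le_one_add_of_norm_sub_one_le {c : R} (hc : ‖c - 1‖ ≤ δ) : ‖c‖ ≤ 1 + δ := by
  have h : ‖c‖ - ‖(1 : R)‖ ≤ ‖c - 1‖ := norm_sub_norm_le c 1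
  rw [norm_one] at h
  linarith

lemma one_sub_le_norm_of_norm_sub_one_le {c : R} (hc : ‖c - 1‖ ≤ δ) : 1 - δ ≤ ‖c‖ := by
  have h : ‖(1 : R)‖ - ‖c‖ ≤ ‖c - 1‖ := norm_sub_rev c 1 ▸ norm_sub_norm_le 1 c
  rw [norm_one] at h
  linarith

lemma norm_add_mul_le_of_norm_le_div {b c z : R} {r : ℝ} (hb : ‖b‖ ≤ δ) (hc : ‖c - 1‖ ≤ δ)
    (hz : ‖z‖ ≤ (r - δ) / (1 + δ)) : ‖b + c * z‖ ≤ r := by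
  have hδ : 0 ≤ δ := (norm_nonneg b).trans hb
  calc ‖b + c * z‖ ≤ ‖b‖ + ‖c‖ * ‖z‖ := norm_add_le_of_le le_rfl (norm_mul_le c z)
    _ ≤ δ + (1 + δ) * ((r - δ) / (1 + δ)) := by
        gcongr
        exact norm_le_one_add_of_norm_sub_one_le hc
    _ = r := by
        field_simp
        ring

lemma one_sub_mul_le_norm_add_add_mul {x b c z : R} {Δ β : ℝ} (hb : ‖b‖ ≤ δ) (hc : ‖c - 1‖ ≤ δ)
    (hz : ‖z‖ ≤ (Δ * β - δ) / (1 + δ)) (hx : β ≤ ‖x‖) : (1 - Δ) * β ≤ ‖x + b + c * z‖ := by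
  have hbcz : ‖b + c * z‖ ≤ Δ * β := norm_add_mul_le_of_norm_le_div hb hc hz
  calc (1 - Δ) * β = β - Δ * β := by ring
    _ ≤ ‖x‖ - ‖b + c * z‖ := sub_le_sub hx hbcz
    _ ≤ ‖x + (b + c * z)‖ := norm_sub_le_norm_add x (b + c * z)
    _ = ‖x + b + c * z‖ := by rw [add_assoc]

lemma mul_pow_succ_mul_pow_le_norm_mul_mul_pow [NormMulClass R] {ρ β : ℝ} (hρ : 0 ≤ ρ)
    (hβ : 0 ≤ β) (γ : R) {ζ w : R} (hζ : ρ ≤ ‖ζ‖) (hw : ρ * β ≤ ‖w‖) (n : ℕ) :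
    ‖γ‖ * ρ ^ (n + 1) * β ^ n ≤ ‖γ * ζ * w ^ n‖ :=
  calc ‖γ‖ * ρ ^ (n + 1) * β ^ n = ‖γ‖ * ρ * (ρ * β) ^ n := by ring
    _ ≤ ‖γ‖ * ‖ζ‖ * ‖w‖ ^ n := by gcongr
    _ = ‖γ * ζ * w ^ n‖ := by rw [norm_mul, norm_mul, norm_pow]

end SeminormedRing

lemma nonneg_of_succ_eq_mul_pow {R : Type*} [Semiring R] [PartialOrder R] [IsOrderedRing R]
    {a : R} {n : ℕ} {u : ℕ → R} (ha : 0 ≤ a) (hu0 : 0 ≤ u 0)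
    (hu : ∀ s, u (s + 1) = a * u s ^ n) (s : ℕ) : 0 ≤ u s := by
  induction s with
  | zero => exact hu0
  | succ s ih => exact hu s ▸ mul_nonneg ha (pow_nonneg ih n)

theorem perturbed_polynomial_recursion_lower_comparison_general
    {R : Type*} [SeminormedRing R] [NormOneClass R] [NormMulClass R]
    (n : ℕ) (γ : R) {δ Δ : ℝ} (hδΔ : δ ≤ Δ) (hΔ : Δ ≤ 1) {ζ b c z x : ℕ → R}
    (hζ : ∀ s, ‖ζ s - 1‖ ≤ δ) (hb : ∀ s, ‖b s‖ ≤ δ) (hc : ∀ s, ‖c s - 1‖ ≤ δ)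
    (hx : ∀ s, x (s + 1) = γ * ζ s * (x s + b s + c s * z s) ^ n)
    {β : ℕ → ℝ} (hβ0 : 0 ≤ β 0) (hβ : ∀ s, β (s + 1) = ‖γ‖ * (1 - Δ) ^ (n + 1) * β s ^ n)
    (hx0 : β 0 ≤ ‖x 0‖) (hz : ∀ s, ‖z s‖ ≤ (Δ * β s - δ) / (1 + δ)) (s : ℕ) :
    β s ≤ ‖x s‖ := by
  have hρ : 0 ≤ 1 - Δ := sub_nonneg.2 hΔ
  have hβ_nonneg : ∀ s, 0 ≤ β s := nonneg_of_succ_eq_mul_pow (by positivity) hβ0 hβ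
  induction s with
  | zero => exact hx0
  | succ s ih =>
    have hζ_lower : 1 - Δ ≤ ‖ζ s‖ :=
      (sub_le_sub_left hδΔ 1).trans (one_sub_le_norm_of_norm_sub_one_le (hζ s))
    have hbase_lower : (1 - Δ) * β s ≤ ‖x s + b s + c s * z s‖ :=
      one_sub_mul_le_norm_add_add_mul (hb s) (hc s) (hz s) ih
    rw [hβ, hx]
    exact mul_pow_succ_mul_pow_le_norm_mul_mul_pow hρ (hβ_nonneg s) γ hζ_lower hbase_lower n

/-- deterministic lower comparison for the perturbed polynomial recursion. -/
theorem perturbed_polynomial_recursion_lower_comparison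
    (k : ℕ) (hk : 3 ≤ k) (γ δ Δ : ℝ) (hγ : 0 < γ) (hδ : 0 < δ) (hδΔ : δ ≤ Δ) (hΔ : Δ ≤ 1)
    (ζ b c z x : ℕ → ℝ)
    (hζ : ∀ s, |ζ s - 1| ≤ δ) (hb : ∀ s, |b s| ≤ δ) (hc : ∀ s, |c s - 1| ≤ δ)
    (hx : ∀ s, x (s + 1) = γ * ζ s * (x s + b s + c s * z s) ^ (k - 1))
    (bb : ℕ → ℝ) (hbb0 : 0 ≤ bb 0)
    (hbb : ∀ s, bb (s + 1) = γ * (1 - Δ) ^ k * bb s ^ (k - 1))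
    (hx0 : bb 0 ≤ |x 0|)
    (hz : ∀ s : ℕ, |z s| ≤ (Δ * bb s - δ) / (1 + δ)) :
    ∀ s : ℕ, bb s ≤ |x s| := by
  obtain ⟨n, rfl⟩ : ∃ n, k = n + 1 := ⟨k - 1, by omega⟩
  exact perturbed_polynomial_recursion_lower_comparison_general n γ hδΔ hΔ hζ hb hc hx hbb0
    (by simpa only [Real.norm_of_nonneg hγ.le, Nat.add_sub_cancel] using hbb) hx0 hz
end

section
/- Assume γ_n = n^{o(1)} and γ_n ≫ (log n)^{−(k−2)/2} as n → ∞, and let ε = ε_k = (6k − 11)/(12(k−1)). Fix η > 0 and Δ ∈ (δ, 1), define m(Δ, L) := max{ ((1+Δ)/(γ_n (1−Δ)^k))^{1/(k−2)}, L } and t_n := ⌊(1+η) · log_{k−1}( log_{k−1} n / max{log_{k−1} γ_n, 1} )⌋. Then there is an absolute constant C' > 0 such that for L and n sufficiently large and for any t ∈ ℕ with P(|X_t| ≥ m(Δ,L)) > 0: P( |X_{t + t_n}| ≥ n^ε | |X_t| ≥ m(Δ, L) ) ≥ 1 − C' · exp( −Δ² m(Δ, L)² / 8 ). -/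
open MeasureTheory ProbabilityTheory Filter Real

/-- The standard Gaussian cumulative distribution function `Φ`. -/
noncomputable def stdGaussCDF (x : ℝ) : ℝ := (gaussianReal 0 1 (Set.Iic x)).toReal

/-- `C_k = (k-2)^{k-2}/(k-1)^{k-1}`. -/
noncomputable def Ckconst (k : ℕ) : ℝ := ((k : ℝ) - 2) ^ (k - 2) / ((k : ℝ) - 1) ^ (k - 1)

/-- `log_{k-1}(log_{k-1} n / max(log_{k-1} γ, 1))`, the iterated-logarithm quantity. -/
noncomputable def logTerm (k n : ℕ) (γ : ℝ) : ℝ :=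
  Real.logb ((k : ℝ) - 1) (Real.logb ((k : ℝ) - 1) n / max (Real.logb ((k : ℝ) - 1) γ) 1)

/-!
Compare `|X_{t+j}|` with the deterministic orbit `a_0 = m(Δ, L)`, `a_{j+1} = g a_j ^ (k-1)`, where
`g = γ (1 - Δ) ^ k`. While `|Z_{t+j}| ≤ Δ a_j / 2`, one step of the process loses at most a factor
`(1 - Δ) ^ k` against `γ a_j ^ (k-1)`, so `|X|` stays above the orbit. The threshold is chosen so
that `g m ^ (k-2) ≥ 1 + Δ`, hence `a_j ≥ (1 + Δ) ^ j m`, and the failure probabilities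
`2 exp (-Δ² a_j² / 8)` sum to at most `4 exp (-Δ² m² / 8)` once `m` is large.

The orbit satisfies `g a_j ^ (k-2) = (g m ^ (k-2)) ^ (k-1) ^ j`. For large `L` also
`g m ^ (k-2) ≥ γ`, so `log (g m ^ (k-2))` is at least a constant multiple of
`M = max (log_{k-1} γ) 1`. With `R = log_{k-1} n / M → ∞`, after `t_n` steps
`(k-1) ^ t_n * log (g m ^ (k-2))` is at least of order `R ^ (1+η) M`, that is `R ^ η log n`, which
beats every multiple of `log n`.
-/

section PowerOrbit

/-- The orbit of `m` under `x ↦ g * x ^ d`: the deterministic lower envelope of the process, with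
`d = k - 1` and `g = γ (1 - Δ) ^ k`. -/
noncomputable def powerOrbit (g : ℝ) (d : ℕ) (m : ℝ) : ℕ → ℝ
  | 0 => m
  | j + 1 => g * powerOrbit g d m j ^ d

variable {g m : ℝ} {d : ℕ}

lemma powerOrbit_pos (hg : 0 < g) (hm : 0 < m) : ∀ j, 0 < powerOrbit g d m j
  | 0 => hm
  | j + 1 => mul_pos hg (pow_pos (powerOrbit_pos hg hm j) d)

lemma pow_mul_le_powerOrbit {r : ℝ} (hd : d ≠ 0) (hg : 0 ≤ g) (hm : 0 ≤ m) (hr : 1 ≤ r)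
    (hgm : r ≤ g * m ^ (d - 1)) (j : ℕ) : r ^ j * m ≤ powerOrbit g d m j := by
  induction j with
  | zero => simp [powerOrbit]
  | succ j ih =>
    have hm_le : m ≤ powerOrbit g d m j := (le_mul_of_one_le_left hm (one_le_pow₀ hr)).trans ih
    have hr_le : r ≤ g * powerOrbit g d m j ^ (d - 1) := hgm.trans (by gcongr)
    calc r ^ (j + 1) * m = r * (r ^ j * m) := by ring
      _ ≤ (g * powerOrbit g d m j ^ (d - 1)) * powerOrbit g d m j :=
          mul_le_mul hr_le ih (by positivity) (by linarith)
      _ = powerOrbit g d m (j + 1) := by rw [mul_assoc, pow_sub_one_mul hd, powerOrbit]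

lemma le_powerOrbit {r : ℝ} (hd : d ≠ 0) (hg : 0 ≤ g) (hm : 0 ≤ m) (hr : 1 ≤ r)
    (hgm : r ≤ g * m ^ (d - 1)) (j : ℕ) : m ≤ powerOrbit g d m j :=
  (le_mul_of_one_le_left hm (one_le_pow₀ hr)).trans (pow_mul_le_powerOrbit hd hg hm hr hgm j)

lemma mul_powerOrbit_pow_pred (hd : d ≠ 0) (g m : ℝ) (j : ℕ) :
    g * powerOrbit g d m j ^ (d - 1) = (g * m ^ (d - 1)) ^ d ^ j := by
  induction j with
  | zero => simp [powerOrbit]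
  | succ j ih =>
    calc g * powerOrbit g d m (j + 1) ^ (d - 1)
        = g ^ (d - 1) * g * (powerOrbit g d m j ^ (d - 1)) ^ d := by rw [powerOrbit]; ring
      _ = (g * powerOrbit g d m j ^ (d - 1)) ^ d := by rw [pow_sub_one_mul hd, mul_pow]
      _ = (g * m ^ (d - 1)) ^ d ^ (j + 1) := by rw [ih, ← pow_mul, pow_succ]

lemma log_add_mul_log_powerOrbit (hd : d ≠ 0) (hg : 0 < g) (hm : 0 < m) (j : ℕ) :
    log g + (d - 1) * log (powerOrbit g d m j) = d ^ j * log (g * m ^ (d - 1)) := by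
  have horbit := powerOrbit_pos (d := d) hg hm j
  have hlog := congrArg log (mul_powerOrbit_pow_pred hd g m j)
  rwa [log_mul hg.ne' (by positivity), log_pow, log_pow, Nat.cast_pow,
    Nat.cast_pred (Nat.pos_of_ne_zero hd)] at hlog

end PowerOrbit

section DoublyExponentialGrowth

lemma rpow_div_le_pow_floor_mul_logb {B x : ℝ} (hB : 1 < B) (hx : 0 < x) (s : ℝ) :
    x ^ s / B ≤ B ^ ⌊s * logb B x⌋₊ := by
  have hB₀ : 0 < B := one_pos.trans hB
  rw [div_le_iff₀ hB₀, ← pow_succ, ← rpow_natCast]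
  calc x ^ s = B ^ (s * logb B x) := by
        rw [mul_comm, rpow_mul hB₀.le, rpow_logb hB₀ hB.ne' hx]
    _ ≤ B ^ ((⌊s * logb B x⌋₊ + 1 : ℕ) : ℝ) := by
        gcongr
        · exact hB.le
        · exact_mod_cast (Nat.lt_floor_add_one _).le

lemma min_log_mul_max_logb_le_log {B a γ y : ℝ} (hB : 1 < B) (ha : 1 ≤ a) (hγ : 0 < γ)
    (hay : a ≤ y) (hγy : γ ≤ y) :
    min (log a) (log B) * max (logb B γ) 1 ≤ log y := by
  have hlogB : 0 < log B := log_pos hB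
  have hmin : 0 ≤ min (log a) (log B) := le_min (log_nonneg ha) hlogB.le
  rw [mul_max_of_nonneg _ _ hmin, mul_one]
  refine max_le ?_ ((min_le_left _ _).trans (log_le_log (by linarith) hay))
  calc min (log a) (log B) * logb B γ ≤ min (log a) (log B) * logb B y := by gcongr
    _ ≤ log B * logb B y := by
        gcongr
        · exact logb_nonneg hB (ha.trans hay)
        · exact min_le_right _ _
    _ = log y := mul_div_cancel₀ _ hlogB.ne'

lemma tendsto_const_mul_natCast_rpow_neg {s : ℝ} (hs : s < 0) (C : ℝ) :
    Tendsto (fun n : ℕ ↦ C * (n : ℝ) ^ s) atTop (nhds 0) := by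
  simpa using ((tendsto_rpow_neg_atTop (neg_pos.2 hs)).comp
    tendsto_natCast_atTop_atTop).const_mul C

lemma tendsto_log_natCast_atTop : Tendsto (fun n : ℕ ↦ log n) atTop atTop :=
  tendsto_log_atTop.comp tendsto_natCast_atTop_atTop

variable {γ : ℕ → ℝ}

lemma eventually_log_le_mul_log_of_tendsto_div
    (hγ : Tendsto (fun n : ℕ ↦ log (γ n) / log n) atTop (nhds 0)) :
    ∀ κ > 0, ∀ᶠ n : ℕ in atTop, log (γ n) ≤ κ * log n := by
  intro κ hκ
  filter_upwards [hγ.eventually_le_const hκ, tendsto_log_natCast_atTop.eventually_gt_atTop 0]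
    with n hn hlog
  rwa [div_le_iff₀ hlog] at hn

lemma tendsto_logb_div_max_logb_atTop {B : ℝ} (hB : 1 < B)
    (hγ : ∀ κ > 0, ∀ᶠ n : ℕ in atTop, log (γ n) ≤ κ * log n) :
    Tendsto (fun n : ℕ ↦ logb B n / max (logb B (γ n)) 1) atTop atTop := by
  have hlogB : 0 < log B := log_pos hB
  refine (atTop_basis' 1).tendsto_right_iff.2 fun K hK ↦ ?_
  have hK₀ : 0 < K := one_pos.trans_le hK
  filter_upwards [hγ K⁻¹ (inv_pos.2 hK₀),
    tendsto_log_natCast_atTop.eventually_ge_atTop (K * log B)] with n hlogγ hlog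
  have hM : 0 < max (logb B (γ n)) 1 := one_pos.trans_le (le_max_right _ _)
  rw [Set.mem_Ici, le_div_iff₀ hM, mul_comm, ← le_div_iff₀ hK₀]
  refine max_le ?_ ?_
  · rw [logb, logb, div_right_comm, div_eq_inv_mul (log n)]
    gcongr
  · rwa [le_div_iff₀ hK₀, one_mul, logb, le_div_iff₀ hlogB]

lemma eventually_mul_log_le_pow_floor_mul_log {B a η : ℝ} {y : ℕ → ℝ} (hB : 1 < B) (ha : 1 < a)
    (hη : 0 < η) (hγpos : ∀ n, 0 < γ n)
    (hγ : ∀ κ > 0, ∀ᶠ n : ℕ in atTop, log (γ n) ≤ κ * log n)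
    (hay : ∀ n, a ≤ y n) (hγy : ∀ n, γ n ≤ y n) (K : ℝ) :
    ∀ᶠ n : ℕ in atTop, K * log n ≤
      B ^ ⌊(1 + η) * logb B (logb B n / max (logb B (γ n)) 1)⌋₊ * log (y n) := by
  have hlogB : 0 < log B := log_pos hB
  set c := min (log a) (log B)
  have hc : 0 < c := lt_min (log_pos ha) hlogB
  have hratio := tendsto_logb_div_max_logb_atTop hB hγ
  filter_upwards [((tendsto_rpow_atTop hη).comp hratio).eventually_ge_atTop (K * B * log B / c),
    hratio.eventually_gt_atTop 0] with n hRη hR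
  set M := max (logb B (γ n)) 1
  set R := logb B n / M
  have hM : 0 < M := one_pos.trans_le (le_max_right _ _)
  have hRM : R * M = log n / log B := div_mul_cancel₀ _ hM.ne'
  calc K * log n = (R * M) * (K * B * log B / c) / B * c := by rw [hRM]; field_simp
    _ ≤ (R * M) * R ^ η / B * c := by gcongr; exact hRη
    _ = R ^ (1 + η) / B * (c * M) := by rw [rpow_add hR, rpow_one]; ring
    _ ≤ B ^ ⌊(1 + η) * logb B R⌋₊ * log (y n) := by
        gcongr
        · exact rpow_div_le_pow_floor_mul_logb hB hR _
        · exact min_log_mul_max_logb_le_log hB ha.le (hγpos n) (hay n) (hγy n)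

lemma eventually_rpow_le_powerOrbit {d : ℕ} (hd : 2 ≤ d) {g m : ℕ → ℝ} {a η : ℝ} (ha : 1 < a)
    (hη : 0 < η) (hγ : ∀ κ > 0, ∀ᶠ n : ℕ in atTop, log (γ n) ≤ κ * log n)
    (hg : ∀ n, 0 < g n) (hgγ : ∀ n, g n ≤ γ n) (hm : ∀ n, 0 < m n)
    (hagm : ∀ n, a ≤ g n * m n ^ (d - 1)) (hγgm : ∀ n, γ n ≤ g n * m n ^ (d - 1)) (ε : ℝ) :
    ∀ᶠ n : ℕ in atTop, (n : ℝ) ^ ε ≤ powerOrbit (g n) d (m n)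
      ⌊(1 + η) * logb d (logb d n / max (logb d (γ n)) 1)⌋₊ := by
  have hd₁ : (1 : ℝ) < d := by exact_mod_cast hd
  filter_upwards [eventually_mul_log_le_pow_floor_mul_log hd₁ ha hη
      (fun n ↦ (hg n).trans_le (hgγ n)) hγ hagm hγgm ((d - 1) * ε + 1),
    hγ 1 one_pos, eventually_ge_atTop 1] with n hlog hlogγ hn
  set T := ⌊(1 + η) * logb d (logb d n / max (logb d (γ n)) 1)⌋₊
  have hn₀ : (0 : ℝ) < n := by exact_mod_cast hn
  have hlogg : log (g n) ≤ log (γ n) := log_le_log (hg n) (hgγ n)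
  have horbit := log_add_mul_log_powerOrbit (d := d) (by omega) (hg n) (hm n) T
  rw [← log_le_log_iff (by positivity) (powerOrbit_pos (hg n) (hm n) T), log_rpow hn₀]
  refine le_of_mul_le_mul_left ?_ (sub_pos.2 hd₁)
  linarith

end DoublyExponentialGrowth

section TailBounds

lemma exp_neg_sq_le_of_pow_mul_le {Δ m a : ℝ} {j : ℕ} (hΔ : 0 ≤ Δ) (hm : 0 ≤ m)
    (hΔm : 4 ≤ Δ ^ 3 * m ^ 2) (ha : (1 + Δ) ^ j * m ≤ a) :
    exp (-(Δ * a / 2) ^ 2 / 2) ≤ exp (-Δ ^ 2 * m ^ 2 / 8) * (1 / 2) ^ j := by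
  have hbernoulli : (1 + j * Δ) * m ≤ a :=
    (mul_le_mul_of_nonneg_right (one_add_mul_le_pow (by linarith) j) hm).trans ha
  have hexponent : -(Δ * a / 2) ^ 2 / 2 ≤ -Δ ^ 2 * m ^ 2 / 8 + j * (-1) := by
    have hsq : Δ ^ 2 * ((1 + j * Δ) * m) ^ 2 ≤ Δ ^ 2 * a ^ 2 := by gcongr
    have hlinear : (j : ℝ) * 4 ≤ j * (Δ ^ 3 * m ^ 2) := by gcongr
    have hquadratic : 0 ≤ Δ ^ 2 * (j * Δ * m) ^ 2 := by positivity
    linarith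
  have hexp : exp (-1) ≤ 1 / 2 := by linarith [exp_neg_one_lt_half]
  calc exp (-(Δ * a / 2) ^ 2 / 2) ≤ exp (-Δ ^ 2 * m ^ 2 / 8 + j * (-1)) := exp_le_exp.2 hexponent
    _ = exp (-Δ ^ 2 * m ^ 2 / 8) * exp (-1) ^ j := by rw [exp_add, exp_nat_mul]
    _ ≤ exp (-Δ ^ 2 * m ^ 2 / 8) * (1 / 2) ^ j := by gcongr

lemma sum_exp_neg_sq_le {Δ m : ℝ} {a : ℕ → ℝ} (hΔ : 0 ≤ Δ) (hm : 0 ≤ m)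
    (hΔm : 4 ≤ Δ ^ 3 * m ^ 2) (ha : ∀ j, (1 + Δ) ^ j * m ≤ a j) (N : ℕ) :
    ∑ j ∈ Finset.range N, 2 * exp (-(Δ * a j / 2) ^ 2 / 2) ≤ 4 * exp (-Δ ^ 2 * m ^ 2 / 8) :=
  calc ∑ j ∈ Finset.range N, 2 * exp (-(Δ * a j / 2) ^ 2 / 2)
      ≤ ∑ j ∈ Finset.range N, 2 * (exp (-Δ ^ 2 * m ^ 2 / 8) * (1 / 2) ^ j) := by
        gcongr with j
        exact exp_neg_sq_le_of_pow_mul_le hΔ hm hΔm (ha j)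
    _ = 2 * exp (-Δ ^ 2 * m ^ 2 / 8) * ∑ j ∈ Finset.range N, (1 / 2 : ℝ) ^ j := by
        simp only [Finset.mul_sum, mul_assoc]
    _ ≤ 2 * exp (-Δ ^ 2 * m ^ 2 / 8) * 2 := by gcongr; exact sum_geometric_two_le N
    _ = 4 * exp (-Δ ^ 2 * m ^ 2 / 8) := by ring

variable {Ω : Type*} [MeasurableSpace Ω] {μ : Measure Ω}

lemma hasSubgaussianMGF_of_map_eq_gaussianReal {v : NNReal} {Z : Ω → ℝ} (hZ : AEMeasurable Z μ)
    (hlaw : μ.map Z = gaussianReal 0 v) : HasSubgaussianMGF Z v μ := by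
  rw [← HasSubgaussianMGF.id_map_iff hZ, hlaw]
  exact ⟨integrable_exp_mul_gaussianReal, fun t ↦ by simp [mgf_id_gaussianReal]⟩

lemma measure_lt_abs_le_of_hasSubgaussianMGF [IsFiniteMeasure μ] {v : NNReal} {Z : Ω → ℝ}
    (hZ : HasSubgaussianMGF Z v μ) {x : ℝ} (hx : 0 ≤ x) :
    μ {ω | x < |Z ω|} ≤ ENNReal.ofReal (2 * exp (-x ^ 2 / (2 * v))) := by
  have hsubset : {ω | x < |Z ω|} ⊆ {ω | x ≤ Z ω} ∪ {ω | x ≤ (-Z) ω} := fun ω hω ↦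
    (lt_abs.1 (show x < |Z ω| from hω)).imp (fun hlt ↦ hlt.le) (fun hlt ↦ hlt.le)
  rw [← ofReal_measureReal]
  refine ENNReal.ofReal_le_ofReal ?_
  calc μ.real {ω | x < |Z ω|} ≤ μ.real {ω | x ≤ Z ω} + μ.real {ω | x ≤ (-Z) ω} :=
        (measureReal_mono hsubset).trans (measureReal_union_le _ _)
    _ ≤ exp (-x ^ 2 / (2 * v)) + exp (-x ^ 2 / (2 * v)) :=
        add_le_add (hZ.measure_ge_le hx) (hZ.neg.measure_ge_le hx)
    _ = 2 * exp (-x ^ 2 / (2 * v)) := (two_mul _).symm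

lemma cond_preimage_eq_of_indepFun [IsFiniteMeasure μ] {α β : Type*} [MeasurableSpace α]
    [MeasurableSpace β] {Z : Ω → α} {Y : Ω → β} (hY : Measurable Y) (hZY : IndepFun Z Y μ)
    {S : Set α} {A : Set β} (hS : MeasurableSet S) (hA : MeasurableSet A) (hμA : μ (Y ⁻¹' A) ≠ 0) :
    μ[Z ⁻¹' S | Y ⁻¹' A] = μ (Z ⁻¹' S) := by
  rw [cond_apply (hY hA), Set.inter_comm, hZY.measure_inter_preimage_eq_mul _ _ hS hA, mul_comm,
    mul_assoc, ENNReal.mul_inv_cancel hμA (measure_ne_top _ _), mul_one]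

end TailBounds

section PerturbedPowerProcess

lemma mul_pow_le_abs_perturbed_step {d : ℕ} {γ Δ δ a x ζ b c z : ℝ} (hγ : 0 ≤ γ) (hΔ : 0 ≤ Δ)
    (hΔ1 : Δ ≤ 1) (hδ : δ ≤ Δ / 4) (ha : 1 ≤ a) (hx : a ≤ |x|) (hζ : |ζ - 1| ≤ δ) (hb : |b| ≤ δ)
    (hc : |c - 1| ≤ δ) (hz : |z| ≤ Δ * a / 2) :
    γ * (1 - Δ) ^ (d + 1) * a ^ d ≤ |γ * ζ * (x + b + c * z) ^ d| := by
  have hζ_ge : 1 - Δ ≤ |ζ| := by linarith [(abs_le.1 hζ).1, le_abs_self ζ]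
  have hc_le : |c| ≤ 1 + 1 / 4 := by
    linarith [abs_sub_abs_le_abs_sub c 1, abs_one (α := ℝ)]
  have hcz : |c * z| ≤ (1 + 1 / 4) * (Δ * a / 2) := by rw [abs_mul]; gcongr
  have hb_le : |b| ≤ Δ * a / 4 := by
    linarith [le_mul_of_one_le_right hΔ ha]
  have hbase : (1 - Δ) * a ≤ |x + b + c * z| := by
    have htriangle : |x| ≤ |x + b + c * z| + |b| + |c * z| :=
      calc |x| = |(x + b + c * z) - b - c * z| := by ring_nf
        _ ≤ |x + b + c * z| + |b| + |c * z| := (abs_sub _ _).trans (by gcongr; exact abs_sub _ _)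
    have hΔa : 0 ≤ Δ * a := by positivity
    linarith
  calc γ * (1 - Δ) ^ (d + 1) * a ^ d = γ * (1 - Δ) * ((1 - Δ) * a) ^ d := by rw [mul_pow]; ring
    _ ≤ γ * |ζ| * |x + b + c * z| ^ d := by gcongr
    _ = |γ * ζ * (x + b + c * z) ^ d| := by rw [abs_mul, abs_mul, abs_pow, abs_of_nonneg hγ]

/-- `X` follows the perturbed polynomial recursion `X' = γ ζ (X + b + c Z) ^ d`, where `d = k - 1`
and the perturbations `ζ - 1`, `b`, `c - 1` are almost surely at most `δ` in absolute value. The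
standard Gaussian noise is relaxed to a `1`-sub-Gaussian one, and the independence assumption to
independence of each `Z t` from every single `X s` with `s ≤ t`. -/
structure IsPerturbedPowerProcess {Ω : Type*} [MeasurableSpace Ω] (μ : Measure Ω) (γ δ : ℝ)
    (d : ℕ) (X ζ b c Z : ℕ → Ω → ℝ) : Prop where
  measurable : ∀ t, Measurable (X t)
  succ_eq : ∀ t ω, X (t + 1) ω = γ * ζ t ω * (X t ω + b t ω + c t ω * Z t ω) ^ d
  hasSubgaussianMGF : ∀ t, HasSubgaussianMGF (Z t) 1 μ
  indepFun : ∀ ⦃s t⦄, s ≤ t → IndepFun (Z t) (X s) μ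
  ae_perturbation_le : ∀ᵐ ω ∂μ, ∀ t, |ζ t ω - 1| ≤ δ ∧ |b t ω| ≤ δ ∧ |c t ω - 1| ≤ δ

namespace IsPerturbedPowerProcess

variable {Ω : Type*} [MeasurableSpace Ω] {μ : Measure Ω} {γ δ Δ m : ℝ} {d t : ℕ}
  {X ζ b c Z : ℕ → Ω → ℝ}

lemma of_gaussian_noise
    (hmeas : ∀ t, Measurable (ζ t) ∧ Measurable (b t) ∧ Measurable (c t) ∧ Measurable (Z t))
    (hX0 : ∀ ω, X 0 ω = 0)
    (hXrec : ∀ t ω, X (t + 1) ω = γ * ζ t ω * (X t ω + b t ω + c t ω * Z t ω) ^ d)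
    (hZlaw : ∀ t, μ.map (Z t) = gaussianReal 0 1)
    (hZindep : ∀ t, Indep (MeasurableSpace.comap (Z t) inferInstance)
      ((⨆ s ∈ Set.Iic t,
          MeasurableSpace.comap (fun ω ↦ (X s ω, ζ s ω, b s ω, c s ω)) inferInstance)
        ⊔ (⨆ s ∈ Set.Iio t, MeasurableSpace.comap (Z s) inferInstance)) μ)
    (hpert : ∀ᵐ ω ∂μ, ∀ t, |ζ t ω - 1| ≤ δ ∧ |b t ω| ≤ δ ∧ |c t ω - 1| ≤ δ) :
    IsPerturbedPowerProcess μ γ δ d X ζ b c Z where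
  measurable t := by
    induction t with
    | zero => simp only [funext hX0, measurable_const]
    | succ t ih =>
      obtain ⟨hζ, hb, hc, hZ⟩ := hmeas t
      rw [funext (hXrec t)]
      fun_prop
  succ_eq := hXrec
  hasSubgaussianMGF t :=
    hasSubgaussianMGF_of_map_eq_gaussianReal (hmeas t).2.2.2.aemeasurable (hZlaw t)
  indepFun s t hst := by
    refine indep_of_indep_of_le_right (hZindep t) (le_sup_of_le_left ?_)
    have hcomap : MeasurableSpace.comap (X s) inferInstance ≤
        MeasurableSpace.comap (fun ω ↦ (X s ω, ζ s ω, b s ω, c s ω)) inferInstance :=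
      (measurable_fst.comp (comap_measurable fun ω ↦ (X s ω, ζ s ω, b s ω, c s ω))).comap_le
    exact hcomap.trans (le_iSup₂_of_le s (Set.mem_Iic.2 hst) le_rfl)
  ae_perturbation_le := hpert

lemma powerOrbit_le_abs (h : IsPerturbedPowerProcess μ γ δ d X ζ b c Z) (hd : d ≠ 0) (hγ : 0 ≤ γ)
    (hΔ : 0 ≤ Δ) (hΔ1 : Δ ≤ 1) (hδ : δ ≤ Δ / 4) (hm : 1 ≤ m)
    (hgm : 1 + Δ ≤ γ * (1 - Δ) ^ (d + 1) * m ^ (d - 1)) {ω : Ω} {N : ℕ} (hX : m ≤ |X t ω|)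
    (hpert : ∀ t, |ζ t ω - 1| ≤ δ ∧ |b t ω| ≤ δ ∧ |c t ω - 1| ≤ δ)
    (hZ : ∀ j < N, |Z (t + j) ω| ≤ Δ * powerOrbit (γ * (1 - Δ) ^ (d + 1)) d m j / 2) :
    powerOrbit (γ * (1 - Δ) ^ (d + 1)) d m N ≤ |X (t + N) ω| := by
  have hg : 0 ≤ γ * (1 - Δ) ^ (d + 1) := mul_nonneg hγ (pow_nonneg (sub_nonneg.2 hΔ1) _)
  induction N with
  | zero => exact hX
  | succ j ih =>
    obtain ⟨hζ, hb, hc⟩ := hpert (t + j)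
    rw [← add_assoc, h.succ_eq]
    exact mul_pow_le_abs_perturbed_step hγ hΔ hΔ1 hδ
      (hm.trans (le_powerOrbit hd hg (by linarith) (by linarith) hgm j))
      (ih fun i hi ↦ hZ i (by omega)) hζ hb hc (hZ j (by omega))

lemma cond_lt_abs_noise_le [IsFiniteMeasure μ] (h : IsPerturbedPowerProcess μ γ δ d X ζ b c Z)
    (hμ : μ {ω | m ≤ |X t ω|} ≠ 0) (j : ℕ) {x : ℝ} (hx : 0 ≤ x) :
    μ[{ω | x < |Z (t + j) ω|} | {ω | m ≤ |X t ω|}] ≤ ENNReal.ofReal (2 * exp (-x ^ 2 / 2)) := by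
  have hindep : μ[{ω | x < |Z (t + j) ω|} | {ω | m ≤ |X t ω|}] = μ {ω | x < |Z (t + j) ω|} :=
    cond_preimage_eq_of_indepFun (S := {z | x < |z|}) (A := {y | m ≤ |y|}) (h.measurable t)
      (h.indepFun (Nat.le_add_right t j)) (measurableSet_lt measurable_const measurable_id.abs)
      (measurableSet_le measurable_const measurable_id.abs) hμ
  simpa [hindep] using measure_lt_abs_le_of_hasSubgaussianMGF (h.hasSubgaussianMGF (t + j)) hx

lemma cond_abs_lt_powerOrbit_le_sum (h : IsPerturbedPowerProcess μ γ δ d X ζ b c Z) (hd : d ≠ 0)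
    (hγ : 0 ≤ γ) (hΔ : 0 ≤ Δ) (hΔ1 : Δ ≤ 1) (hδ : δ ≤ Δ / 4) (hm : 1 ≤ m)
    (hgm : 1 + Δ ≤ γ * (1 - Δ) ^ (d + 1) * m ^ (d - 1)) (t N : ℕ) :
    μ[{ω | |X (t + N) ω| < powerOrbit (γ * (1 - Δ) ^ (d + 1)) d m N} | {ω | m ≤ |X t ω|}] ≤
      ∑ j ∈ Finset.range N,
        μ[{ω | Δ * powerOrbit (γ * (1 - Δ) ^ (d + 1)) d m j / 2 < |Z (t + j) ω|} |
          {ω | m ≤ |X t ω|}] := by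
  refine le_trans (measure_mono_ae ?_) (measure_biUnion_finset_le _ _)
  filter_upwards [cond_absolutelyContinuous h.ae_perturbation_le,
    ae_cond_mem (measurableSet_le measurable_const (h.measurable t).abs)] with ω hpert hXt hfail
  by_contra hgood
  have hZ : ∀ j < N, |Z (t + j) ω| ≤ Δ * powerOrbit (γ * (1 - Δ) ^ (d + 1)) d m j / 2 :=
    fun j hj ↦ not_lt.1 fun hlt ↦ hgood (Set.mem_biUnion (Finset.mem_range.2 hj) hlt)
  exact (h.powerOrbit_le_abs hd hγ hΔ hΔ1 hδ hm hgm hXt hpert hZ).not_gt hfail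

theorem ofReal_one_sub_le_cond_powerOrbit_le_abs [IsFiniteMeasure μ]
    (h : IsPerturbedPowerProcess μ γ δ d X ζ b c Z) (hd : d ≠ 0) (hγ : 0 ≤ γ) (hΔ : 0 ≤ Δ)
    (hΔ1 : Δ ≤ 1) (hδ : δ ≤ Δ / 4) (hm : 1 ≤ m) (hΔm : 4 ≤ Δ ^ 3 * m ^ 2)
    (hgm : 1 + Δ ≤ γ * (1 - Δ) ^ (d + 1) * m ^ (d - 1))
    (hμ : μ {ω | m ≤ |X t ω|} ≠ 0) (N : ℕ) :
    ENNReal.ofReal (1 - 4 * exp (-Δ ^ 2 * m ^ 2 / 8)) ≤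
      μ[{ω | powerOrbit (γ * (1 - Δ) ^ (d + 1)) d m N ≤ |X (t + N) ω|} | {ω | m ≤ |X t ω|}] := by
  set a := powerOrbit (γ * (1 - Δ) ^ (d + 1)) d m
  set A := {ω | m ≤ |X t ω|}
  have hm₀ : 0 ≤ m := zero_le_one.trans hm
  have hg : 0 ≤ γ * (1 - Δ) ^ (d + 1) := mul_nonneg hγ (pow_nonneg (sub_nonneg.2 hΔ1) _)
  have ha : ∀ j, (1 + Δ) ^ j * m ≤ a j := pow_mul_le_powerOrbit hd hg hm₀ (by linarith) hgm
  have ha₀ : ∀ j, 0 ≤ a j := fun j ↦ le_trans (by positivity) (ha j)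
  have hfail : μ[{ω | |X (t + N) ω| < a N} | A] ≤ ENNReal.ofReal (4 * exp (-Δ ^ 2 * m ^ 2 / 8)) :=
    calc μ[{ω | |X (t + N) ω| < a N} | A]
        ≤ ∑ j ∈ Finset.range N, μ[{ω | Δ * a j / 2 < |Z (t + j) ω|} | A] :=
          h.cond_abs_lt_powerOrbit_le_sum hd hγ hΔ hΔ1 hδ hm hgm t N
      _ ≤ ∑ j ∈ Finset.range N, ENNReal.ofReal (2 * exp (-(Δ * a j / 2) ^ 2 / 2)) := by
          gcongr with j
          exact h.cond_lt_abs_noise_le hμ j (by have := ha₀ j; positivity)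
      _ = ENNReal.ofReal (∑ j ∈ Finset.range N, 2 * exp (-(Δ * a j / 2) ^ 2 / 2)) :=
          (ENNReal.ofReal_sum_of_nonneg fun j _ ↦ by positivity).symm
      _ ≤ ENNReal.ofReal (4 * exp (-Δ ^ 2 * m ^ 2 / 8)) :=
          ENNReal.ofReal_le_ofReal (sum_exp_neg_sq_le hΔ hm₀ hΔm ha N)
  have : IsProbabilityMeasure μ[|A] := cond_isProbabilityMeasure hμ
  have hcompl : {ω | a N ≤ |X (t + N) ω|} = {ω | |X (t + N) ω| < a N}ᶜ := by
    ext ω; simp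
  rw [hcompl, prob_compl_eq_one_sub (measurableSet_lt (h.measurable _).abs measurable_const),
    ENNReal.ofReal_sub _ (by positivity), ENNReal.ofReal_one]
  exact tsub_le_tsub_left hfail 1

end IsPerturbedPowerProcess

end PerturbedPowerProcess

section EscapeThreshold

/-- The paper's threshold `m(Δ, L)` at gain `γ`. -/
noncomputable def escapeThreshold (k : ℕ) (γ Δ L : ℝ) : ℝ :=
  max (((1 + Δ) / (γ * (1 - Δ) ^ k)) ^ (1 / ((k : ℝ) - 2))) L

lemma le_escapeThreshold (k : ℕ) (γ Δ L : ℝ) : L ≤ escapeThreshold k γ Δ L := le_max_right _ _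

variable {k : ℕ} {γ Δ L : ℝ}

lemma one_add_le_mul_escapeThreshold_pow (hk : 3 ≤ k) (hγ : 0 < γ) (hΔ : 0 < Δ) (hΔ1 : Δ < 1)
    (L : ℝ) : 1 + Δ ≤ γ * (1 - Δ) ^ k * escapeThreshold k γ Δ L ^ (k - 2) := by
  have hg : 0 < γ * (1 - Δ) ^ k := mul_pos hγ (pow_pos (sub_pos.2 hΔ1) k)
  have hratio : 0 ≤ (1 + Δ) / (γ * (1 - Δ) ^ k) := by positivity
  rw [← div_le_iff₀' hg]
  calc (1 + Δ) / (γ * (1 - Δ) ^ k)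
      = (((1 + Δ) / (γ * (1 - Δ) ^ k)) ^ (1 / ((k : ℝ) - 2))) ^ (k - 2) := by
        have hcast : ((k - 2 : ℕ) : ℝ) = k - 2 := by push_cast [show 2 ≤ k by omega]; rfl
        rw [one_div, ← hcast, rpow_inv_natCast_pow hratio (by omega)]
    _ ≤ escapeThreshold k γ Δ L ^ (k - 2) := by gcongr; exact le_max_left _ _

lemma le_mul_escapeThreshold_pow (hk : 3 ≤ k) (hγ : 0 ≤ γ) (hΔ : 0 ≤ Δ) (hΔ1 : Δ < 1)
    (hL : ((1 - Δ) ^ k)⁻¹ ≤ L) : γ ≤ γ * (1 - Δ) ^ k * escapeThreshold k γ Δ L ^ (k - 2) := by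
  have hpow : 0 < (1 - Δ) ^ k := pow_pos (sub_pos.2 hΔ1) k
  have hL1 : 1 ≤ L := ((one_le_inv₀ hpow).2 (pow_le_one₀ (by linarith) (by linarith))).trans hL
  have hthreshold := le_escapeThreshold k γ Δ L
  have hpow_le : ((1 - Δ) ^ k)⁻¹ ≤ escapeThreshold k γ Δ L ^ (k - 2) :=
    (hL.trans hthreshold).trans (le_self_pow₀ (hL1.trans hthreshold) (by omega))
  rw [mul_assoc]
  exact le_mul_of_one_le_right hγ ((inv_le_iff_one_le_mul₀' hpow).1 hpow_le)

lemma eventually_rpow_le_powerOrbit_escapeThreshold {γ : ℕ → ℝ} {η : ℝ} (hk : 3 ≤ k)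
    (hγpos : ∀ n, 0 < γ n) (hγ : ∀ κ > 0, ∀ᶠ n : ℕ in atTop, log (γ n) ≤ κ * log n)
    (hη : 0 < η) (hΔ : 0 < Δ) (hΔ1 : Δ < 1) (hL : ((1 - Δ) ^ k)⁻¹ ≤ L) (ε : ℝ) :
    ∀ᶠ n : ℕ in atTop, (n : ℝ) ^ ε ≤
      powerOrbit (γ n * (1 - Δ) ^ k) (k - 1) (escapeThreshold k (γ n) Δ L)
        ⌊(1 + η) * logTerm k n (γ n)⌋₊ := by
  unfold logTerm
  have h1Δ : 0 < 1 - Δ := sub_pos.2 hΔ1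
  have hL₀ : 0 < L := (by positivity : 0 < ((1 - Δ) ^ k)⁻¹).trans_le hL
  have hgrowth := eventually_rpow_le_powerOrbit (d := k - 1) (a := 1 + Δ) (by omega) (by linarith)
    hη hγ (fun n ↦ mul_pos (hγpos n) (pow_pos h1Δ k))
    (fun n ↦ mul_le_of_le_one_right (hγpos n).le (pow_le_one₀ h1Δ.le (by linarith)))
    (fun n ↦ hL₀.trans_le (le_escapeThreshold k (γ n) Δ L))
    (fun n ↦ one_add_le_mul_escapeThreshold_pow hk (hγpos n) hΔ hΔ1 L)
    (fun n ↦ le_mul_escapeThreshold_pow hk (hγpos n).le hΔ.le hΔ1 hL) ε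
  simpa only [Nat.cast_pred (show 0 < k by omega)] using hgrowth

end EscapeThreshold

theorem perturbed_process_second_stage_general {k : ℕ} (hk : 3 ≤ k) {Ω : ℕ → Type*}
    [∀ n, MeasurableSpace (Ω n)] {μ : ∀ n, Measure (Ω n)} [∀ n, IsProbabilityMeasure (μ n)]
    {γ δ : ℕ → ℝ} {X ζ b c Z : ∀ n, ℕ → Ω n → ℝ}
    (hX : ∀ n, IsPerturbedPowerProcess (μ n) (γ n) (δ n) (k - 1) (X n) (ζ n) (b n) (c n) (Z n))
    (hγpos : ∀ n, 0 < γ n) (hγ : ∀ κ > 0, ∀ᶠ n : ℕ in atTop, log (γ n) ≤ κ * log n)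
    (hδ : Tendsto δ atTop (nhds 0)) (ε : ℝ) {η : ℝ} (hη : 0 < η) {Δ : ℝ} (hΔ : 0 < Δ)
    (hΔ1 : Δ < 1) :
    ∃ L₀ : ℝ, ∀ L : ℝ, L₀ ≤ L → ∀ᶠ n : ℕ in atTop, ∀ t : ℕ,
      μ n {ω | escapeThreshold k (γ n) Δ L ≤ |X n t ω|} ≠ 0 →
      ENNReal.ofReal (1 - 4 * exp (-Δ ^ 2 * escapeThreshold k (γ n) Δ L ^ 2 / 8)) ≤
        (μ n)[{ω | (n : ℝ) ^ ε ≤ |X n (t + ⌊(1 + η) * logTerm k n (γ n)⌋₊) ω|} |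
          {ω | escapeThreshold k (γ n) Δ L ≤ |X n t ω|}] := by
  refine ⟨max (4 / Δ ^ 3) ((1 - Δ) ^ k)⁻¹, fun L hL ↦ ?_⟩
  obtain ⟨hL_noise, hL_gain⟩ := max_le_iff.1 hL
  filter_upwards [hδ.eventually_le_const (show 0 < Δ / 4 by positivity),
    eventually_rpow_le_powerOrbit_escapeThreshold hk hγpos hγ hη hΔ hΔ1 hL_gain ε]
    with n hδn hgrowth t hμ
  have hm : 4 / Δ ^ 3 ≤ escapeThreshold k (γ n) Δ L :=
    hL_noise.trans (le_escapeThreshold k (γ n) Δ L)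
  have hm1 : 1 ≤ escapeThreshold k (γ n) Δ L := by
    refine le_trans ?_ hm
    rw [one_le_div₀ (by positivity)]
    linarith [pow_le_one₀ (n := 3) hΔ.le hΔ1.le]
  have hΔm : 4 ≤ Δ ^ 3 * escapeThreshold k (γ n) Δ L ^ 2 :=
    calc 4 ≤ Δ ^ 3 * escapeThreshold k (γ n) Δ L := (div_le_iff₀' (by positivity)).1 hm
      _ ≤ Δ ^ 3 * escapeThreshold k (γ n) Δ L ^ 2 := by
          gcongr
          exact le_self_pow₀ hm1 two_ne_zero
  have hgain := one_add_le_mul_escapeThreshold_pow hk (hγpos n) hΔ hΔ1 L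
  have hk1 : k - 1 + 1 = k := by omega
  have hescape := (hX n).ofReal_one_sub_le_cond_powerOrbit_le_abs (t := t) (by omega)
    (hγpos n).le hΔ.le hΔ1.le hδn hm1 hΔm (by rwa [hk1]) hμ
    ⌊(1 + η) * logTerm k n (γ n)⌋₊
  rw [hk1] at hescape
  exact hescape.trans (measure_mono fun ω hω ↦ hgrowth.trans hω)

/-- once the perturbed polynomial process exceeds `m(Δ,L)`, within
`⌊(1+η) log_{k−1}(log_{k−1} n / max(log_{k−1} γ_n, 1))⌋` further steps it reaches `n^ε`,
with conditional probability at least `1 − C' exp(−Δ² m(Δ,L)²/8)`. -/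
theorem perturbed_process_second_stage
    (k : ℕ) (hk : 3 ≤ k) (C : ℝ) (hC : 0 < C)
    (Ω : Type) [MeasurableSpace Ω] (μ : Measure Ω) [IsProbabilityMeasure μ]
    (γ : ℕ → ℝ) (hγpos : ∀ n, 0 < γ n)
    (hγup : Tendsto (fun n : ℕ => Real.log (γ n) / Real.log n) atTop (nhds 0))
    (hγlow : Tendsto (fun n : ℕ => γ n * Real.log n ^ (((k : ℝ) - 2) / 2)) atTop atTop)
    (X ζ b c Z : ℕ → ℕ → Ω → ℝ)
    (hmeas : ∀ n t, Measurable (ζ n t) ∧ Measurable (b n t) ∧ Measurable (c n t) ∧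
      Measurable (Z n t))
    (hX0 : ∀ n ω, X n 0 ω = 0)
    (hXrec : ∀ n t ω,
      X n (t + 1) ω = γ n * ζ n t ω * (X n t ω + b n t ω + c n t ω * Z n t ω) ^ (k - 1))
    (hZlaw : ∀ n t, Measure.map (Z n t) μ = gaussianReal 0 1)
    (hZindep : ∀ n t, Indep (MeasurableSpace.comap (Z n t) inferInstance)
      ((⨆ s ∈ Set.Iic t,
          MeasurableSpace.comap (fun ω => (X n s ω, ζ n s ω, b n s ω, c n s ω)) inferInstance)
        ⊔ (⨆ s ∈ Set.Iio t, MeasurableSpace.comap (Z n s) inferInstance)) μ)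
    (hpert : ∀ n, ∀ᵐ ω ∂μ, ∀ t,
      |ζ n t ω - 1| ≤ (C + 1) * (n : ℝ) ^ (-(1 : ℝ) / 6) ∧
      |b n t ω| ≤ (C + 1) * (n : ℝ) ^ (-(1 : ℝ) / 6) ∧
      |c n t ω - 1| ≤ (C + 1) * (n : ℝ) ^ (-(1 : ℝ) / 6)) :
    ∃ C' : ℝ, 0 < C' ∧ ∀ η : ℝ, 0 < η → ∀ Δ : ℝ, 0 < Δ → Δ < 1 →
      ∃ L₀ : ℝ, ∀ L : ℝ, L₀ ≤ L →
        ∀ᶠ n : ℕ in atTop,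
          (C + 1) * (n : ℝ) ^ (-(1 : ℝ) / 6) < Δ →
          ∀ t : ℕ,
            μ {ω | max (((1 + Δ) / (γ n * (1 - Δ) ^ k)) ^ (1 / ((k : ℝ) - 2))) L
                ≤ |X n t ω|} ≠ 0 →
            ENNReal.ofReal (1 - C' * Real.exp
                (-Δ ^ 2 * (max (((1 + Δ) / (γ n * (1 - Δ) ^ k)) ^ (1 / ((k : ℝ) - 2))) L) ^ 2 / 8))
              ≤ μ[|{ω | max (((1 + Δ) / (γ n * (1 - Δ) ^ k)) ^ (1 / ((k : ℝ) - 2))) L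
                    ≤ |X n t ω|}]
                  {ω | (n : ℝ) ^ ((6 * (k : ℝ) - 11) / (12 * ((k : ℝ) - 1)))
                    ≤ |X n (t + Nat.floor ((1 + η) * logTerm k n (γ n))) ω|} := by
  refine ⟨4, by norm_num, fun η hη Δ hΔ hΔ1 ↦ ?_⟩
  obtain ⟨L₀, hL₀⟩ := perturbed_process_second_stage_general hk
    (fun n ↦ .of_gaussian_noise (hmeas n) (hX0 n) (hXrec n) (hZlaw n) (hZindep n) (hpert n)) hγpos
    (eventually_log_le_mul_log_of_tendsto_div hγup)
    (tendsto_const_mul_natCast_rpow_neg (by norm_num) (C + 1)) _ hη hΔ hΔ1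
  exact ⟨L₀, fun L hL ↦ (hL₀ L hL).mono fun n hn _ ↦ hn⟩
end
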